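/- arXiv:2503.24217 — 3 statements merged into one kernel-verified Lean document; each statement's English description precedes it below -/
import Mathlib

section
/- If G is a finite non-abelian group, then 0 is a character value of G, i.e. there exist an irreducible complex character χ of G and an element g ∈ G with χ(g) = 0. -/
open CategoryTheory
def cv (G : Type) [Monoid G] : Set ℂ :=
  {z | ∃ V : FDRep ℂ G, Simple V ∧ ∃ g : G, V.character g = z}

theorem aux_simple {G V : Type} [Group G] [Fintype G] [AddCommGroup V] [Module ℂ V] [FiniteDimensional ℂ V]
    (ρ : Representation ℂ G V) [ρ.IsIrreducible] : Simple (FDRep.of ρ) := by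
  rw [FDRep.simple_iff_char_is_norm_one]
  have hn : (Nat.card G : ℂ) ≠ 0 := by simp
  have := invertibleOfNonzero hn
  have h := Representation.char_orthonormal ρ ρ
  rw [if_pos ⟨Representation.Equiv.refl ρ⟩] at h
  rw [inv_mul_eq_one₀ hn] at h
  exact_mod_cast h.symm

theorem aux_module {G : Type} [Group G] [Fintype G] (M : Type) [AddCommGroup M] [Module ℂ M]
    [Module (MonoidAlgebra ℂ G) M] [IsScalarTower ℂ (MonoidAlgebra ℂ G) M]
    [Module.Finite (MonoidAlgebra ℂ G) M]
    (hS : IsSimpleModule (MonoidAlgebra ℂ G) M) (g h : G)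
    (hc : ∀ V : FDRep ℂ G, Simple V → V.ρ g = V.ρ h) (x : M) :
    MonoidAlgebra.of ℂ G g • x = MonoidAlgebra.of ℂ G h • x := by
  let ρ : Representation ℂ G M := Representation.ofModule' M
  have hρ : ∀ (g : G) (x : M), ρ g x = MonoidAlgebra.of ℂ G g • x := fun _ _ => rfl
  have halg : ρ.asAlgebraHom = Algebra.lsmul ℂ ℂ M :=
    Equiv.apply_symm_apply (MonoidAlgebra.lift ℂ (M →ₗ[ℂ] M) G) _
  let e : ρ.asModule ≃ₗ[MonoidAlgebra ℂ G] M :=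
    { ρ.asModuleEquiv.toAddEquiv with
      map_smul' := fun r y => by
        have h1 := ρ.asModuleEquiv_map_smul r y
        rw [halg] at h1
        exact h1 }
  have hirr : ρ.IsIrreducible := by
    rw [Representation.irreducible_iff_isSimpleModule_asModule]
    exact IsSimpleModule.congr e
  have hfd : Module.Finite ℂ M := Module.Finite.trans (MonoidAlgebra ℂ G) M
  have h1 := hc _ (aux_simple ρ)
  have h2 : ρ g = ρ h := h1
  rw [← hρ, ← hρ, h2]

theorem aux_exists {G : Type} [Group G] [Fintype G] (a b : G) (hab : a * b ≠ b * a) :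
    ∃ V : FDRep ℂ G, Simple V ∧ V.ρ (a * b) ≠ V.ρ (b * a) := by
  by_contra! hc
  have : NeZero (Nat.card G : ℂ) := ⟨by simp⟩
  have key : ∀ S : Submodule (MonoidAlgebra ℂ G) (MonoidAlgebra ℂ G), IsSimpleModule (MonoidAlgebra ℂ G) S →
      ∀ x ∈ S, MonoidAlgebra.of ℂ G (a*b) * x = MonoidAlgebra.of ℂ G (b*a) * x := by
    intro S hS x hx
    exact congrArg Subtype.val (aux_module S hS (a*b) (b*a) hc ⟨x, hx⟩)
  have h3 : ∀ x : MonoidAlgebra ℂ G, MonoidAlgebra.of ℂ G (a*b) * x = MonoidAlgebra.of ℂ G (b*a) * x := by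
    intro x
    have hx : x ∈ sSup { m : Submodule (MonoidAlgebra ℂ G) (MonoidAlgebra ℂ G) | IsSimpleModule (MonoidAlgebra ℂ G) m } := by
      rw [IsSemisimpleModule.sSup_simples_eq_top]; trivial
    rw [sSup_eq_iSup'] at hx
    induction hx using Submodule.iSup_induction' with
    | mem i x hx => exact key i.1 i.2 x hx
    | zero => simp
    | add x y _ _ hx hy => rw [mul_add, mul_add, hx, hy]
  have h4 := h3 1
  rw [mul_one, mul_one] at h4
  exact hab (MonoidAlgebra.of_injective h4)

theorem aux_finrank {V : Type} [AddCommGroup V] [Module ℂ V] [FiniteDimensional ℂ V]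
    (f g : Module.End ℂ V) (h : f * g ≠ g * f) : 2 ≤ Module.finrank ℂ V := by
  by_contra! hlt
  apply h
  have : ∀ f : Module.End ℂ V, ∃ c : ℂ, ∀ v, f v = c • v := by
    intro f
    obtain ⟨v, hv⟩ := finrank_le_one_iff.1 (Nat.lt_succ_iff.1 hlt)
    obtain ⟨c, hc⟩ := hv (f v)
    refine ⟨c, fun w => ?_⟩
    obtain ⟨d, rfl⟩ := hv w
    rw [map_smul, ← hc, smul_comm]
  obtain ⟨c, hc⟩ := this f
  obtain ⟨d, hd⟩ := this g
  ext v
  simp [hc, hd, smul_comm c d]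

open Module End in
theorem aux_trace {V : Type} [AddCommGroup V] [Module ℂ V] [FiniteDimensional ℂ V]
    (f : Module.End ℂ V) (m : ℕ) (hm : m ≠ 0) (hf : f ^ m = 1) (ζ : ℂ) (hζ : IsPrimitiveRoot ζ m) :
    ∃ p : Polynomial ℤ, ∀ k : ℕ, Polynomial.aeval (ζ ^ k) p = LinearMap.trace ℂ V (f ^ k) := by
  classical
  have hss : f.IsSemisimple := by
    apply Module.End.isSemisimple_of_squarefree_aeval_eq_zero (p := Polynomial.X ^ m - 1)
    · apply Polynomial.Separable.squarefree
      exact Polynomial.separable_X_pow_sub_C (1:ℂ) (by exact_mod_cast hm) one_ne_zero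
    · simp [hf]
  have htop : ⨆ μ, f.eigenspace μ = ⊤ := by
    rw [← f.iSup_maxGenEigenspace_eq_top]
    exact iSup_congr fun μ => (hss.isFinitelySemisimple.maxGenEigenspace_eq_eigenspace μ).symm
  have hint := DirectSum.isInternal_submodule_of_iSupIndep_of_iSup_eq_top f.eigenspaces_iSupIndep htop
  have hfin : {μ | f.eigenspace μ ≠ ⊥}.Finite := WellFoundedGT.finite_ne_bot_of_iSupIndep f.eigenspaces_iSupIndep
  have hpow : ∀ k μ v, v ∈ f.eigenspace μ → (f ^ k) v = μ ^ k • v := by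
    intro k μ v hv
    rw [mem_eigenspace_iff] at hv
    induction k with
    | zero => simp
    | succ k ih => rw [_root_.pow_succ', Module.End.mul_apply, ih, map_smul, hv, smul_smul, _root_.pow_succ]
  have hmaps : ∀ k μ, Set.MapsTo (f ^ k : Module.End ℂ V) (f.eigenspace μ : Set V) (f.eigenspace μ : Set V) := by
    intro k μ v hv
    rw [hpow k μ v hv]
    exact Submodule.smul_mem _ _ hv
  have htr : ∀ k, LinearMap.trace ℂ V (f ^ k) = ∑ μ ∈ hfin.toFinset, μ ^ k * (finrank ℂ (f.eigenspace μ) : ℂ) := by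
    intro k
    rw [LinearMap.trace_eq_sum_trace_restrict' hint hfin (hmaps k)]
    refine Finset.sum_congr rfl fun μ _ => ?_
    have : (f ^ k).restrict (hmaps k μ) = μ ^ k • LinearMap.id := by
      ext v
      exact hpow k μ v v.2
    rw [this, map_smul, LinearMap.trace_id, smul_eq_mul]
  have hex : ∀ μ ∈ hfin.toFinset, ∃ i : ℕ, ζ ^ i = μ := by
    intro μ hμ
    have hμ : f.eigenspace μ ≠ ⊥ := by simpa using hμ
    obtain ⟨v, hv, hv0⟩ := Submodule.exists_mem_ne_zero_of_ne_bot hμ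
    have h1 := hpow m μ v hv
    rw [hf] at h1
    have h2 : μ ^ m = 1 := by
      have : (1:ℂ) • v = μ ^ m • v := by simpa using h1
      exact (smul_left_injective ℂ hv0 this).symm
    have : NeZero m := ⟨hm⟩
    obtain ⟨i, _, hi⟩ := hζ.eq_pow_of_pow_eq_one h2
    exact ⟨i, hi⟩
  choose! i hi using hex
  refine ⟨∑ μ ∈ hfin.toFinset, Polynomial.X ^ (i μ) * ((finrank ℂ (f.eigenspace μ) : ℕ) : Polynomial ℤ), fun k => ?_⟩
  rw [htr, map_sum]
  refine Finset.sum_congr rfl fun μ hμ => ?_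
  have h1 : (ζ ^ k) ^ i μ = μ ^ k := by rw [pow_right_comm, hi μ hμ]
  simp [h1]

theorem aux_prod {ι : Type} (s : Finset ι) (z : ι → ℝ) (hz : ∀ i ∈ s, 0 ≤ z i)
    (h : ∑ i ∈ s, z i < s.card) : ∏ i ∈ s, z i < 1 := by
  calc ∏ i ∈ s, z i ≤ ∏ i ∈ s, Real.exp (z i - 1) :=
        Finset.prod_le_prod hz fun i _ => by linarith [Real.add_one_le_exp (z i - 1)]
    _ = Real.exp (∑ i ∈ s, (z i - 1)) := (Real.exp_sum _ _).symm
    _ < 1 := by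
      rw [Real.exp_lt_one_iff] 
      simp
      linarith

theorem aux_int {K : Type} [Field K] [NumberField K] (x : K) (hx : IsIntegral ℤ x)
    (h : ∀ σ : K →ₐ[ℚ] ℂ, ‖σ x‖ < 1) : x = 0 := by
  have h1 : IsIntegral ℤ (Algebra.norm ℚ x) := Algebra.isIntegral_norm ℚ hx
  obtain ⟨n, hn⟩ := IsIntegrallyClosed.isIntegral_iff.1 h1
  have h2 := Algebra.norm_eq_prod_embeddings ℚ ℂ x
  have h3 : ‖algebraMap ℚ ℂ (Algebra.norm ℚ x)‖ < 1 := by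
    rw [h2, norm_prod]
    have : Nonempty (K →ₐ[ℚ] ℂ) := ⟨IsAlgClosed.lift⟩
    obtain ⟨σ⟩ := this
    apply aux_prod _ _ (fun _ _ => norm_nonneg _)
    calc _ < ∑ σ : K →ₐ[ℚ] ℂ, (1:ℝ) := Finset.sum_lt_sum_of_nonempty ⟨σ, Finset.mem_univ _⟩ fun σ _ => h σ
      _ = _ := by simp
  rw [← hn] at h3
  simp at h3
  have h4 : n = 0 := by
    rw [← Int.abs_lt_one_iff]
    exact_mod_cast h3
  rw [h4] at hn
  exact Algebra.norm_eq_zero_iff.1 (hn.symm.trans (map_zero _))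

theorem aux_main {G : Type} [Group G] [Fintype G] (V : FDRep ℂ G) [Simple V]
    (K : Type) [Field K] [NumberField K] [IsCyclotomicExtension {Nat.card G} ℚ K]
    (hV : 2 ≤ Module.finrank ℂ V) : ∃ g : G, V.character g = 0 := by
  classical
  by_contra! hne
  set m := Nat.card G with hmdef
  have hm : m ≠ 0 := Nat.card_pos.ne'
  have : NeZero m := ⟨hm⟩
  let ζ : K := IsCyclotomicExtension.zeta m ℚ K
  have hζ : IsPrimitiveRoot ζ m := IsCyclotomicExtension.zeta_spec m ℚ K
  let σ₀ : K →ₐ[ℚ] ℂ := IsAlgClosed.lift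
  have hζ₀ : IsPrimitiveRoot (σ₀ ζ) m := hζ.map_of_injective σ₀.injective
  have hpg : ∀ g : G, ∃ p : Polynomial ℤ, ∀ k : ℕ,
      Polynomial.aeval ((σ₀ ζ) ^ k) p = V.character (g ^ k) := by
    intro g
    obtain ⟨p, hp⟩ := aux_trace (V.ρ g) m hm (by rw [← map_pow, hmdef, pow_card_eq_one', map_one])
      (σ₀ ζ) hζ₀
    refine ⟨p, fun k => ?_⟩
    rw [hp, FDRep.character, map_pow V.ρ]
  choose p hp using hpg
  have hinv : ∀ g : G, V.character g⁻¹ = (starRingEnd ℂ) (V.character g) := by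
    intro g
    have h1 : g⁻¹ = g ^ (m - 1) := by
      rw [inv_eq_iff_mul_eq_one, ← pow_succ', Nat.sub_add_cancel (Nat.pos_of_ne_zero hm), hmdef,
        pow_card_eq_one']
    have h2 : (σ₀ ζ) ^ (m - 1) = (starRingEnd ℂ) (σ₀ ζ) := by
      have h3 : (starRingEnd ℂ) (σ₀ ζ) = (σ₀ ζ)⁻¹ :=
        (Complex.inv_eq_conj (hζ₀.norm'_eq_one hm)).symm
      rw [h3]
      apply eq_inv_of_mul_eq_one_left
      rw [← pow_succ, Nat.sub_add_cancel (Nat.pos_of_ne_zero hm), hζ₀.pow_eq_one]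
    have h4 := hp g 1
    rw [pow_one, pow_one] at h4
    rw [h1, ← hp, h2, ← h4, Polynomial.aeval_def, Polynomial.aeval_def, Polynomial.hom_eval₂]
    congr 1
    exact RingHom.ext_int _ _
  have hsum : ∑ g : G, ‖V.character g‖ ^ 2 = m := by
    have h1 := (FDRep.simple_iff_char_is_norm_one V).1 inferInstance
    have h2 : ∀ g : G, V.character g * V.character g⁻¹ = ((‖V.character g‖ ^ 2 : ℝ) : ℂ) := by
      intro g
      rw [hinv, Complex.mul_conj, Complex.normSq_eq_norm_sq]
    simp_rw [h2] at h1
    exact_mod_cast h1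
  let s : Finset G := Finset.univ.erase 1
  have hprod : ‖∏ g ∈ s, V.character g‖ < 1 := by
    have h1 : ∏ g ∈ s, ‖V.character g‖ ^ 2 < 1 := by
      apply aux_prod _ _ (fun _ _ => by positivity)
      have h2 := Finset.add_sum_erase Finset.univ (fun g => ‖V.character g‖ ^ 2) (Finset.mem_univ 1)
      have h3 : s.card + 1 = m := by
        rw [Finset.card_erase_add_one (Finset.mem_univ 1), Finset.card_univ, hmdef,
          Nat.card_eq_fintype_card]
      have h4 : (4:ℝ) ≤ ‖V.character 1‖ ^ 2 := by
        rw [FDRep.char_one, Complex.norm_natCast]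
        have : (2:ℝ) ≤ Module.finrank ℂ V := by exact_mod_cast hV
        nlinarith
      have h5 : (s.card : ℝ) + 1 = m := by exact_mod_cast h3
      rw [hsum] at h2
      change _ + ∑ g ∈ s, ‖V.character g‖ ^ 2 = _ at h2
      linarith
    rw [Finset.prod_pow, ← norm_prod] at h1
    exact (sq_lt_one_iff₀ (norm_nonneg _)).1 h1
  have hQ : ∀ k : ℕ, k.Coprime m → Polynomial.aeval ((σ₀ ζ) ^ k) (∏ g ∈ s, p g) =
      ∏ g ∈ s, V.character g := by
    intro k hk
    rw [map_prod]
    simp_rw [hp]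
    let e := powCoprime (G := G) hk.symm
    refine Finset.prod_equiv e ?_ ?_
    · intro g
      have : e g = 1 ↔ g = 1 := by
        rw [← e.injective.eq_iff (a := g) (b := 1)]
        rw [show e 1 = 1 from powCoprime_one (G := G) hk.symm]
      simpa [s] using this.symm.not
    · intro g _
      rfl
  have hx : Polynomial.aeval ζ (∏ g ∈ s, p g) = 0 := by
    apply aux_int
    · exact IsIntegral.of_mem_of_fg (Algebra.adjoin ℤ {ζ})
        ((hζ.isIntegral (Nat.pos_of_ne_zero hm)).fg_adjoin_singleton) _
        (Polynomial.aeval_mem_adjoin_singleton _ _)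
    · intro σ
      have h1 : IsPrimitiveRoot (σ ζ) m := hζ.map_of_injective σ.injective
      obtain ⟨k, _, hk, hk'⟩ := hζ₀.isPrimitiveRoot_iff.1 h1
      have h2 : σ (Polynomial.aeval ζ (∏ g ∈ s, p g)) = Polynomial.aeval (σ ζ) (∏ g ∈ s, p g) :=
        (Polynomial.aeval_algHom_apply (σ.restrictScalars ℤ) ζ _).symm
      rw [h2, ← hk', hQ k hk]
      exact hprod
  have h0 := hQ 1 (Nat.coprime_one_left m)
  have h2 : σ₀ (Polynomial.aeval ζ (∏ g ∈ s, p g)) = Polynomial.aeval (σ₀ ζ) (∏ g ∈ s, p g) :=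
    (Polynomial.aeval_algHom_apply (σ₀.restrictScalars ℤ) ζ _).symm
  rw [pow_one, ← h2, hx, map_zero] at h0
  exact Finset.prod_ne_zero_iff.2 (fun g _ => hne g) h0.symm

theorem zero_mem_cv_of_nonabelian (G : Type) [Group G] [Fintype G]
    (h : ¬ ∀ a b : G, a * b = b * a) :
    (0 : ℂ) ∈ cv G := by
  push Not at h
  obtain ⟨a, b, hab⟩ := h
  obtain ⟨V, hV, hne⟩ := aux_exists a b hab
  rw [map_mul, map_mul] at hne
  have : NeZero (Nat.card G) := ⟨Nat.card_pos.ne'⟩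
  have : IsCyclotomicExtension {Nat.card G} ℚ (CyclotomicField (Nat.card G) ℚ) :=
    CyclotomicField.isCyclotomicExtension (Nat.card G) ℚ
  exact ⟨V, hV, aux_main V (CyclotomicField (Nat.card G) ℚ) (aux_finrank _ _ hne)⟩
end

section
/- Let G be a finite non-abelian nilpotent group with |cdc(G)| = 3, where cdc(G) = cv(G) \ cd(G). Then G is a 2-group, |cd(G)| = 2, cv(G) = {1, m, −1, −m, 0} where cd(G) = {1, m}, and every irreducible character χ of G satisfies |cv(χ)| ≤ 3. -/
open CategoryTheory
def cd (G : Type) [Monoid G] : Set ℂ :=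
  {z | ∃ V : FDRep ℂ G, Simple V ∧ V.character 1 = z}

theorem fd_schur {G : Type} [Group G] (V : FDRep ℂ G) [Simple V] (f : V →ₗ[ℂ] V)
    (hf : ∀ g, f ∘ₗ V.ρ g = V.ρ g ∘ₗ f) : ∃ c : ℂ, f = c • LinearMap.id := by
  have h1 : Module.finrank ℂ (V ⟶ V) = 1 := finrank_endomorphism_simple_eq_one ℂ V
  let F : V ⟶ V := ⟨InducedCategory.homMk (ModuleCat.ofHom f), fun g ↦ by
    ext x; exact LinearMap.congr_fun (hf g) x⟩
  obtain ⟨c, hc⟩ := (finrank_eq_one_iff_of_nonzero' (𝟙 V) (id_nonzero V)).mp h1 F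
  refine ⟨c, ?_⟩
  have := congrArg (fun t : V ⟶ V => t.hom.hom.hom) hc
  exact this.symm

theorem char_scalar {G : Type} [Group G] (V : FDRep ℂ G) {z : G} {c : ℂ}
    (h : V.ρ z = c • LinearMap.id) (y : G) : V.character (z * y) = c * V.character y := by
  simp only [FDRep.character, map_mul, h]
  rw [show (c • LinearMap.id : V →ₗ[ℂ] V) * V.ρ y = c • V.ρ y by ext; rfl, map_smul, smul_eq_mul]

theorem simple_of_irr {G : Type} [Group G] [Fintype G] {M : Type} [AddCommGroup M] [Module ℂ M]
    [FiniteDimensional ℂ M] (r : Representation ℂ G M) [r.IsIrreducible] :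
    Simple (FDRep.of r) := by
  rw [FDRep.simple_iff_char_is_norm_one]
  have := invertibleOfNonzero (NeZero.ne (Nat.card G : ℂ))
  have h := Representation.char_orthonormal r r
  rw [if_pos ⟨Representation.Equiv.refl _⟩] at h
  change ∑ g : G, r.character g * r.character g⁻¹ = _
  simp at h
  rw [inv_mul_eq_one₀ (NeZero.ne _)] at h
  simpa using h.symm

theorem dim_one_of_scalar {G : Type} [Group G] [Fintype G] (V : FDRep ℂ G) [hV : Simple V]
    (h : ∀ g, ∃ c : ℂ, V.ρ g = c • LinearMap.id) : V.character 1 = 1 := by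
  have h2 := (FDRep.simple_iff_char_is_norm_one V).1 hV
  have h3 : ∀ g, V.character g * V.character g⁻¹ = V.character 1 * V.character 1 := by
    intro g
    obtain ⟨c, hc⟩ := h g
    have e1 := char_scalar V hc 1
    have e2 := char_scalar V hc g⁻¹
    rw [mul_one] at e1
    rw [mul_inv_cancel] at e2
    rw [e1]; nth_rw 3 [e2]; ring
  simp only [h3, Finset.sum_const, Finset.card_univ, nsmul_eq_mul, Nat.card_eq_fintype_card] at h2
  have h4 : (Fintype.card G : ℂ) ≠ 0 := by simp
  have h5 : V.character 1 * V.character 1 = 1 := by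
    apply mul_left_cancel₀ h4; rw [h2, mul_one]
  rw [FDRep.char_one] at *
  norm_cast at *
  exact Nat.eq_one_of_mul_eq_one_left h5

theorem char_one_pos {G : Type} [Group G] [Fintype G] (V : FDRep ℂ G) [hV : Simple V] :
    ∃ n : ℕ, 0 < n ∧ V.character 1 = n := by
  refine ⟨_, ?_, V.char_one⟩
  by_contra h0
  have h0 : Module.finrank ℂ V = 0 := by omega
  have h2 := (FDRep.simple_iff_char_is_norm_one V).1 hV
  have := Module.finrank_zero_iff.1 h0
  have h3 : ∀ g, V.character g = 0 := fun g => by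
    rw [FDRep.character, show V.ρ g = 0 from Subsingleton.elim _ _, map_zero]
  simp only [h3, mul_zero, Finset.sum_const_zero] at h2
  exact (NeZero.ne (Nat.card G : ℂ)) h2.symm

theorem key {G : Type} [Group G] [Fintype G] [Group.IsNilpotent G] (V : FDRep ℂ G) [hV : Simple V]
    (hd : V.character 1 ≠ 1) :
    ∃ (z x : G) (c : ℂ), c ≠ 1 ∧ V.ρ z = c • LinearMap.id ∧ V.character x = 0 := by
  have comm : ∀ z : G, (∀ h, V.ρ (z * h * z⁻¹ * h⁻¹) = 1) → ∃ c : ℂ, V.ρ z = c • LinearMap.id := by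
    intro z hz
    apply fd_schur
    intro h
    change V.ρ z * V.ρ h = V.ρ h * V.ρ z
    rw [← map_mul, ← map_mul]
    have : z * h = (z * h * z⁻¹ * h⁻¹) * (h * z) := by group
    rw [this, map_mul, hz, one_mul]
  let P : ℕ → Prop := fun n => ∀ x ∈ (⊤ : Subgroup G).lowerCentralSeries n, ∀ g, V.ρ (x * g * x⁻¹ * g⁻¹) = 1
  have hP : ∃ n, P n := by
    obtain ⟨n, hn⟩ := Subgroup.nilpotent_iff_lowerCentralSeries.1 ‹Group.IsNilpotent G›
    refine ⟨n, fun x hx g => ?_⟩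
    rw [hn, Subgroup.mem_bot] at hx
    simp [hx]
  classical
  have hm := Nat.find_spec hP
  have hmin := fun k => Nat.find_min (m := k) hP
  generalize Nat.find hP = n at hm hmin
  cases n with
  | zero =>
    exact absurd (dim_one_of_scalar V fun g => comm g (hm g (by simp))) hd
  | succ k =>
    have := hmin k (by omega)
    simp only [P, not_forall] at this
    obtain ⟨x, hx, g, hg⟩ := this
    obtain ⟨c, hc⟩ := comm (x * g * x⁻¹ * g⁻¹) (hm _ (Subgroup.commutator_mem_commutator hx (Subgroup.mem_top g)))
    have c1 : c ≠ 1 := by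
      rintro rfl
      exact hg (by rw [hc, one_smul]; rfl)
    refine ⟨_, x, c, c1, hc, ?_⟩
    have e := char_scalar V hc (g * x * g⁻¹)
    rw [show x * g * x⁻¹ * g⁻¹ * (g * x * g⁻¹) = x by group, FDRep.char_conj] at e
    have : (c - 1) * V.character x = 0 := by rw [sub_mul, ← e]; ring
    exact (mul_eq_zero.1 this).resolve_left (sub_ne_zero.2 c1)

theorem commute_of_dim_one {M : Type} [AddCommGroup M] [Module ℂ M]
    (h : Module.finrank ℂ M = 1) (f g : M →ₗ[ℂ] M) : f * g = g * f := by
  obtain ⟨v, -, hv⟩ := finrank_eq_one_iff'.1 h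
  obtain ⟨a, ha⟩ := hv (f v)
  obtain ⟨b, hb⟩ := hv (g v)
  ext w
  obtain ⟨c, rfl⟩ := hv w
  simp only [Module.End.mul_apply, map_smul, ← ha, ← hb]
  rw [smul_comm a b]

theorem exists_nonlinear_aux {G : Type} [Group G] [Fintype G] (M : Type) [AddCommGroup M]
    [Module ℂ M] [Module (MonoidAlgebra ℂ G) M] [IsScalarTower ℂ (MonoidAlgebra ℂ G) M]
    [hs : IsSimpleModule (MonoidAlgebra ℂ G) M]
    [hf : Module.Finite (MonoidAlgebra ℂ G) M] (a b : G) (v : M)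
    (hv : (MonoidAlgebra.of ℂ G (a * b) - MonoidAlgebra.of ℂ G (b * a)) • v ≠ 0) :
    ∃ V : FDRep ℂ G, Simple V ∧ V.character 1 ≠ 1 := by
  let ρ : Representation ℂ G M := Representation.ofModule' M
  have hρ : ρ.asAlgebraHom = Algebra.lsmul ℂ ℂ M :=
    Equiv.apply_symm_apply (MonoidAlgebra.lift ℂ (M →ₗ[ℂ] M) G) _
  let e : ρ.asModule ≃ₗ[MonoidAlgebra ℂ G] M :=
    { ρ.asModuleEquiv with
      map_smul' := fun r x => by
        change ρ.asModuleEquiv (r • x) = r • ρ.asModuleEquiv x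
        rw [Representation.asModuleEquiv_map_smul, hρ]; rfl }
  have hirr : ρ.IsIrreducible :=
    ρ.irreducible_iff_isSimpleModule_asModule.2 (IsSimpleModule.congr e)
  have hfin : FiniteDimensional ℂ M := Module.Finite.trans (MonoidAlgebra ℂ G) _
  have hS := simple_of_irr ρ
  refine ⟨_, hS, fun h1 => ?_⟩
  rw [FDRep.char_one] at h1
  have h1 : Module.finrank ℂ M = 1 := by exact_mod_cast h1
  have h2 : ρ (a * b) = ρ (b * a) := by
    rw [map_mul, map_mul]; exact commute_of_dim_one h1 _ _
  have h3 : ρ.asAlgebraHom (MonoidAlgebra.of ℂ G (a * b) - MonoidAlgebra.of ℂ G (b * a)) = 0 := by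
    rw [map_sub, Representation.asAlgebraHom_of, Representation.asAlgebraHom_of, h2, sub_self]
  rw [hρ] at h3
  exact hv (LinearMap.congr_fun h3 v)

theorem exists_nonlinear {G : Type} [Group G] [Fintype G] (hna : ¬ ∀ a b : G, a * b = b * a) :
    ∃ V : FDRep ℂ G, Simple V ∧ V.character 1 ≠ 1 := by
  push Not at hna
  obtain ⟨a, b, hab⟩ := hna
  have : NeZero (Nat.card G : ℂ) := inferInstance
  let r : MonoidAlgebra ℂ G := MonoidAlgebra.of ℂ G (a * b) - MonoidAlgebra.of ℂ G (b * a)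
  have hr : r ≠ 0 := fun h => hab (MonoidAlgebra.of_injective (sub_eq_zero.1 h))
  have : ∃ I : Submodule (MonoidAlgebra ℂ G) (MonoidAlgebra ℂ G), IsCoatom I ∧ r ∉ I := by
    obtain ⟨S, hS, hle⟩ := (eq_bot_or_exists_atom_le
      (Submodule.span (MonoidAlgebra ℂ G) {r})).resolve_left (by simpa using hr)
    obtain ⟨I, hI⟩ := exists_isCompl S
    refine ⟨I, hI.isAtom_iff_isCoatom.1 hS, fun h => hS.1 ?_⟩
    have : S ≤ I := hle.trans (by simpa using h)
    exact hI.disjoint.eq_bot_of_le this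
  obtain ⟨I, hI, hrI⟩ := this
  have hs : IsSimpleModule (MonoidAlgebra ℂ G) (MonoidAlgebra ℂ G ⧸ I) :=
    isSimpleModule_iff_isCoatom.2 hI
  refine exists_nonlinear_aux (MonoidAlgebra ℂ G ⧸ I) a b (Submodule.Quotient.mk 1) ?_
  rw [← Submodule.Quotient.mk_smul, Ne, Submodule.Quotient.mk_eq_zero, smul_eq_mul, mul_one]
  exact hrI

theorem sq_cong {ι R : Type*} [CommRing R] (s : Finset ι) (d : ι → ℕ) (a : ι → R) :
    ∃ r, (∑ i ∈ s, (d i : R) * a i) ^ 2 = ∑ i ∈ s, (d i : R) * a i ^ 2 + 2 * r := by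
  classical
  induction s using Finset.induction_on with
  | empty => exact ⟨0, by simp⟩
  | insert i s hi ih =>
    obtain ⟨r, hr⟩ := ih
    rw [Finset.sum_insert hi, Finset.sum_insert hi]
    obtain ⟨k, hk⟩ : ∃ k : ℕ, d i * d i = d i + 2 * k := by
      obtain ⟨k, hk⟩ := Nat.even_mul_pred_self (d i)
      refine ⟨k, ?_⟩
      cases h : d i with
      | zero => simp [h] at hk; omega
      | succ n => simp [h] at hk; nlinarith
    have hk' : (d i : R) * d i = d i + 2 * k := by exact_mod_cast congrArg (Nat.cast (R := R)) hk
    refine ⟨r + k * a i ^ 2 + d i * a i * ∑ i ∈ s, (d i : R) * a i, ?_⟩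
    linear_combination hr + a i ^ 2 * hk'

theorem pow_cong {ι R : Type*} [CommRing R] (s : Finset ι) (d : ι → ℕ) (a : ι → R) (k : ℕ) :
    ∃ r, (∑ i ∈ s, (d i : R) * a i) ^ (2 ^ k) = ∑ i ∈ s, (d i : R) * a i ^ (2 ^ k) + 2 * r := by
  induction k with
  | zero => exact ⟨0, by simp⟩
  | succ k ih =>
    obtain ⟨r, hr⟩ := ih
    obtain ⟨r', hr'⟩ := sq_cong s d (fun i => a i ^ 2 ^ k)
    rw [pow_succ 2 k, pow_mul, hr]
    simp only [pow_mul]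
    refine ⟨r' + 2 * r * (∑ i ∈ s, (d i : R) * a i ^ 2 ^ k) + 2 * r ^ 2, ?_⟩
    linear_combination hr'

theorem trace_eig {M : Type} [AddCommGroup M] [Module ℂ M] [FiniteDimensional ℂ M]
    (f : Module.End ℂ M) (n : ℕ) (hn : n ≠ 0) (hf : f ^ n = 1) :
    ∃ (s : Finset ℂ) (d : ℂ → ℕ), (∀ μ ∈ s, μ ^ n = 1) ∧
      LinearMap.trace ℂ M f = ∑ μ ∈ s, (d μ : ℂ) * μ ∧
      (Module.finrank ℂ M : ℂ) = ∑ μ ∈ s, (d μ : ℂ) := by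
  have hss : f.IsSemisimple := by
    apply Module.End.isSemisimple_of_squarefree_aeval_eq_zero (p := Polynomial.X ^ n - 1)
    · have : (Polynomial.X ^ n - 1 : Polynomial ℂ).Separable := by
        rw [Polynomial.X_pow_sub_one_separable_iff]; exact_mod_cast hn
      exact this.squarefree
    · simp [hf]
  have hint : DirectSum.IsInternal f.eigenspace :=
    DirectSum.isInternal_submodule_of_iSupIndep_of_iSup_eq_top
      f.eigenspaces_iSupIndep hss.iSup_eigenspace_eq_top
  have hN : {i | f.eigenspace i ≠ ⊥}.Finite := WellFoundedGT.finite_ne_bot_of_iSupIndep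
    hint.submodule_iSupIndep
  refine ⟨hN.toFinset, fun μ => Module.finrank ℂ (f.eigenspace μ), ?_, ?_, ?_⟩
  · intro μ hμ
    simp only [Set.Finite.mem_toFinset, Set.mem_ofPred_eq] at hμ
    obtain ⟨v, hv, hv0⟩ := Submodule.exists_mem_ne_zero_of_ne_bot hμ
    rw [Module.End.mem_eigenspace_iff] at hv
    have h : ∀ k : ℕ, (f ^ k) v = μ ^ k • v := by
      intro k
      induction k with
      | zero => simp
      | succ k ih => rw [pow_succ', Module.End.mul_apply, ih, map_smul, hv, smul_smul, pow_succ]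
    have h1 := h n
    rw [hf, Module.End.one_apply] at h1
    have : (μ ^ n - 1) • v = 0 := by rw [sub_smul, ← h1, one_smul, sub_self]
    exact sub_eq_zero.1 ((smul_eq_zero.1 this).resolve_right hv0)
  · have hm : ∀ i, Set.MapsTo f (f.eigenspace i) (f.eigenspace i) := by
      intro i v hv
      simp only [SetLike.mem_coe, Module.End.mem_eigenspace_iff] at hv ⊢
      rw [hv, map_smul, hv]
    rw [LinearMap.trace_eq_sum_trace_restrict' hint hN hm]
    refine Finset.sum_congr rfl fun μ _ => ?_
    have : f.restrict (hm μ) = μ • LinearMap.id := by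
      ext ⟨v, hv⟩
      exact Module.End.mem_eigenspace_iff.1 hv
    rw [this, map_smul, LinearMap.trace_id, smul_eq_mul, mul_comm]
  · have hm : ∀ i, Set.MapsTo (LinearMap.id : M →ₗ[ℂ] M) (f.eigenspace i) (f.eigenspace i) :=
      fun i v hv => hv
    rw [← LinearMap.trace_id, LinearMap.trace_eq_sum_trace_restrict' hint hN hm]
    refine Finset.sum_congr rfl fun μ _ => ?_
    rw [← LinearMap.trace_id]; rfl

theorem char_cong {G : Type} [Group G] (V : FDRep ℂ G) (g : G) (k : ℕ) (hg : g ^ 2 ^ k = 1) :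
    ∃ r : ℂ, IsIntegral ℤ r ∧ V.character g ^ 2 ^ k = V.character 1 + 2 * r := by
  obtain ⟨s, d, h1, h2, h3⟩ := trace_eig (V.ρ g) (2 ^ k) (by positivity) (by rw [← map_pow, hg, map_one])
  have hi : ∀ i : s, IsIntegral ℤ (i : ℂ) := fun i =>
    IsIntegral.of_pow (n := 2 ^ k) (by positivity) (by rw [h1 i i.2]; exact isIntegral_one)
  obtain ⟨r, hr⟩ := pow_cong (R := integralClosure ℤ ℂ) (Finset.univ : Finset s)
    (fun i => d i) (fun i => ⟨i, hi i⟩) k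
  have hr' := congrArg (fun t : integralClosure ℤ ℂ => (t : ℂ)) hr
  refine ⟨r, r.2, ?_⟩
  rw [FDRep.char_one, h3, FDRep.character, h2, ← Finset.sum_coe_sort s, ← Finset.sum_coe_sort s]
  push_cast at hr'
  rw [hr']
  congr 1
  refine Finset.sum_congr rfl fun i _ => ?_
  rw [h1 i i.2, mul_one]

theorem half_not_int (r : ℂ) (hr : IsIntegral ℤ r) : (1 : ℂ) ≠ 2 * r := by
  intro h
  have h2 : r = algebraMap ℚ ℂ (1/2) := by
    rw [map_div₀]; simp; linear_combination (-1/2) * h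
  rw [h2, isIntegral_algebraMap_iff (algebraMap ℚ ℂ).injective,
    IsIntegrallyClosed.isIntegral_iff] at hr
  obtain ⟨y, hy⟩ := hr
  have : (2 * y : ℚ) = 1 := by simp at hy; rw [hy]; norm_num
  have : 2 * y = 1 := by exact_mod_cast this
  omega

theorem exists_lin {G : Type} [Group G] [Finite G] [Group.IsNilpotent G] [Nontrivial G] :
    ∃ (φ : G →* ℂˣ) (g : G), φ g ≠ 1 := by
  have h := Group.IsSolvable.commutator_lt_top_of_nontrivial G
  obtain ⟨g, -, hg⟩ := SetLike.exists_of_lt h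
  have hg' : Abelianization.of g ≠ 1 := by
    intro h
    exact hg ((QuotientGroup.eq_one_iff g).1 h)
  have : Finite (Abelianization G) := Quotient.finite _
  obtain ⟨φ, hφ⟩ := CommGroup.exists_apply_ne_one_of_hasEnoughRootsOfUnity (Abelianization G) ℂ hg'
  exact ⟨φ.comp Abelianization.of, g, hφ⟩

theorem lin_mem {G : Type} [Group G] [Fintype G] (φ : G →* ℂˣ) :
    ∃ V : FDRep ℂ G, Simple V ∧ ∀ g, V.character g = φ g := by
  let ρ : Representation ℂ G ℂ :=
    ((Algebra.lmul ℂ ℂ : ℂ →* Module.End ℂ ℂ)).comp ((Units.coeHom ℂ).comp φ)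
  have h : ∀ g, (FDRep.of ρ).character g = φ g := by
    intro g
    change LinearMap.trace ℂ ℂ (ρ g) = _
    have : ρ g = (φ g : ℂ) • LinearMap.id := by ext; simp [ρ]
    rw [this, map_smul, LinearMap.trace_id]; simp
  refine ⟨FDRep.of ρ, ?_, h⟩
  rw [FDRep.simple_iff_char_is_norm_one]
  simp [h]

theorem two_group {G : Type} [Group G] [Fintype G] [hn : Group.IsNilpotent G]
    (h : ∀ (φ : G →* ℂˣ) (g : G), φ g ^ 2 = 1) : IsPGroup 2 G := by
  rw [IsPGroup.iff_card]
  refine ⟨_, Nat.eq_prime_pow_of_unique_prime_dvd Nat.card_pos.ne' fun {p} hp hpd => ?_⟩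
  by_contra hp2
  obtain ⟨e⟩ := ((Group.isNilpotent_of_finite_tfae (G := G)).out 0 4).1 hn
  have hpf : p ∈ (Nat.card G).primeFactors := Nat.mem_primeFactors.2 ⟨hp, hpd, Nat.card_pos.ne'⟩
  have : Fact p.Prime := ⟨hp⟩
  obtain ⟨P⟩ : Nonempty (Sylow p G) := inferInstance
  have hne : P.1 ≠ ⊥ := P.ne_bot_of_dvd_card hpd
  have : Nontrivial P := (Subgroup.nontrivial_iff_ne_bot _).2 hne
  have : Group.IsNilpotent P := inferInstance
  obtain ⟨φ, x, hx⟩ := exists_lin (G := P)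
  let π : G →* P := ((Pi.evalMonoidHom (fun P : Sylow p G => P) P).comp
    (Pi.evalMonoidHom (fun p : (Nat.card G).primeFactors => ∀ P : Sylow p G, P) ⟨p, hpf⟩)).comp
    e.symm.toMonoidHom
  have hπ : Function.Surjective π := by
    classical
    intro y
    refine ⟨e (Pi.mulSingle ⟨p, hpf⟩ (Pi.mulSingle P y)), ?_⟩
    simp [π]
  obtain ⟨g, rfl⟩ := hπ x
  have h2 := h (φ.comp π) g
  obtain ⟨k, hk⟩ := P.isPGroup' (π g)
  have h3 : φ (π g) ^ p ^ k = 1 := by rw [← map_pow, hk, map_one]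
  have hc : Nat.Coprime 2 (p ^ k) :=
    ((Nat.coprime_primes Nat.prime_two hp).2 (Ne.symm hp2)).pow_right k
  apply hx
  have h4 := orderOf_dvd_of_pow_eq_one h2
  have h5 := orderOf_dvd_of_pow_eq_one h3
  exact orderOf_eq_one_iff.1 (Nat.eq_one_of_dvd_coprimes hc h4 h5)

theorem ncard_three_le (a b c : ℂ) : ({a, b, c} : Set ℂ).ncard ≤ 3 := by
  have h1 := Set.ncard_insert_le a {b, c}
  have h2 := Set.ncard_insert_le b {c}
  rw [Set.ncard_singleton] at h2
  omega

theorem scalar_norm {G : Type} [Group G] [Fintype G] (V : FDRep ℂ G) [Simple V] {z : G} {c : ℂ}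
    (h : V.ρ z = c • LinearMap.id) : ‖c‖ = 1 := by
  obtain ⟨n, hn, h1⟩ := char_one_pos V
  have h2 : ∀ k : ℕ, V.character (z ^ k) = c ^ k * n := by
    intro k
    induction k with
    | zero => simpa using h1
    | succ k ih => rw [pow_succ', char_scalar V h, ih, pow_succ']; ring
  have h3 := h2 (Fintype.card G)
  rw [pow_card_eq_one, h1] at h3
  have hn' : (n : ℂ) ≠ 0 := by exact_mod_cast hn.ne'
  have h4 : c ^ Fintype.card G = 1 := by
    apply mul_right_cancel₀ hn'; rw [← h3, one_mul]
  exact Complex.norm_eq_one_of_pow_eq_one h4 Fintype.card_ne_zero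

theorem nilpotent_cdc_three (G : Type) [Group G] [Fintype G]
    [Group.IsNilpotent G] (hna : ¬ ∀ a b : G, a * b = b * a)
    (h3 : (cv G \ cd G).ncard = 3) :
    IsPGroup 2 G ∧ (cd G).ncard = 2 ∧
    (∃ m : ℂ, cd G = {1, m} ∧ cv G = {1, m, -1, -m, 0}) ∧
    (∀ V : FDRep ℂ G, Simple V → (Set.range V.character).ncard ≤ 3) := by
  have F1 : ∀ w ∈ cd G, ∃ n : ℕ, 0 < n ∧ w = n := by
    rintro w ⟨V, hV, rfl⟩
    exact char_one_pos V
  have F2 : (1 : ℂ) ∈ cd G := by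
    obtain ⟨V, hV, h⟩ := lin_mem (1 : G →* ℂˣ)
    exact ⟨V, hV, by simp [h]⟩
  have Flin : ∀ (φ : G →* ℂˣ) (g : G), ‖(φ g : ℂ)‖ = 1 := by
    intro φ g
    have : (φ g : ℂ) ^ Fintype.card G = 1 := by
      rw [← Units.val_pow_eq_pow_val, ← map_pow, pow_card_eq_one, map_one, Units.val_one]
    exact Complex.norm_eq_one_of_pow_eq_one this Fintype.card_ne_zero
  have F3 : ∀ (φ : G →* ℂˣ) (g : G), φ g ≠ 1 → (φ g : ℂ) ∈ cv G \ cd G := by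
    intro φ g hg
    obtain ⟨V, hV, h⟩ := lin_mem φ
    refine ⟨⟨V, hV, g, h g⟩, fun hc => ?_⟩
    obtain ⟨n, hn, e⟩ := F1 _ hc
    have hN := Flin φ g
    rw [e, Complex.norm_natCast] at hN
    have : n = 1 := by exact_mod_cast hN
    subst this
    exact hg (Units.ext (by simpa using e))
  have F4 : ∀ (V : FDRep ℂ G), Simple V → ∀ (n : ℕ), V.character 1 = n → ∀ (z : G) (c : ℂ),
      V.character z = c * n → ‖c‖ = 1 → c ≠ 1 → c * n ∈ cv G \ cd G := by
    intro V hV n hn z c hz hc hc1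
    refine ⟨⟨V, hV, z, hz⟩, fun hcd => ?_⟩
    obtain ⟨k, hk, e⟩ := F1 _ hcd
    have hN := congrArg norm e
    rw [norm_mul, hc, one_mul, Complex.norm_natCast, Complex.norm_natCast] at hN
    have : n = k := by exact_mod_cast hN
    subst this
    have hk' : (n : ℂ) ≠ 0 := by exact_mod_cast hk.ne'
    exact hc1 (mul_right_cancel₀ hk' (by rw [e, one_mul]))
  -- facts about non-linear characters
  have F5 : ∀ (V : FDRep ℂ G), Simple V → V.character 1 ≠ 1 → ∃ (n : ℕ) (c : ℂ), 2 ≤ n ∧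
      V.character 1 = n ∧ ‖c‖ = 1 ∧ c ≠ 1 ∧ c * n ∈ cv G \ cd G ∧ c⁻¹ * n ∈ cv G \ cd G ∧
      ∃ x, V.character x = 0 := by
    intro V hV hd
    obtain ⟨n, hn, e⟩ := char_one_pos V
    obtain ⟨z, x, c, hc1, hz, hx⟩ := key V hd
    have hc := scalar_norm V hz
    have hc0 : c ≠ 0 := by rintro rfl; simp at hc
    have hn1 : n ≠ 1 := by rintro rfl; exact hd (by simpa using e)
    have e1 := char_scalar V hz 1
    rw [mul_one, e] at e1
    have e2 := char_scalar V hz z⁻¹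
    rw [mul_inv_cancel, e] at e2
    refine ⟨n, c, by omega, e, hc, hc1, F4 V hV n e z c e1 hc hc1,
      F4 V hV n e z⁻¹ c⁻¹ ?_ (by rw [norm_inv, hc, inv_one]) (by simpa using hc1), x, hx⟩
    rw [e2, inv_mul_cancel_left₀ hc0]
  obtain ⟨V₀, hV₀, hd₀⟩ := exists_nonlinear hna
  obtain ⟨m, c, hm2, hm, hc, hc1, hw, hw', x₀, hx₀⟩ := F5 V₀ hV₀ hd₀
  have : Nontrivial G := by
    by_contra hG
    rw [not_nontrivial_iff_subsingleton] at hG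
    exact hna fun a b => Subsingleton.elim _ _
  obtain ⟨φ, g₀, hφ⟩ := exists_lin (G := G)
  have hu := F3 φ g₀ hφ
  have hun := Flin φ g₀
  have h0 : (0 : ℂ) ∈ cv G \ cd G := by
    refine ⟨⟨V₀, hV₀, x₀, hx₀⟩, fun h => ?_⟩
    obtain ⟨n, hn, e⟩ := F1 _ h
    exact hn.ne (by exact_mod_cast e)
  have hu' := F3 φ g₀⁻¹ (by simpa using hφ)
  have hun' := Flin φ g₀⁻¹
  rw [map_inv, Units.val_inv_eq_inv_val] at hu' hun'
  have hu1 : (φ g₀ : ℂ) ≠ 1 := fun h => hφ (Units.ext (by simpa using h))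
  generalize (φ g₀ : ℂ) = u at hu hun hu' hun' hu1
  have hmR : (2 : ℝ) ≤ m := by exact_mod_cast hm2
  have hmC : (m : ℂ) ≠ 0 := by
    have : m ≠ 0 := by omega
    exact_mod_cast this
  have hwn : ‖c * (m : ℂ)‖ = m := by rw [norm_mul, hc, one_mul, Complex.norm_natCast]
  have hwn' : ‖c⁻¹ * (m : ℂ)‖ = m := by
    rw [norm_mul, norm_inv, hc, inv_one, one_mul, Complex.norm_natCast]
  have hX : cv G \ cd G = {0, u, c * m} := by
    have hfin : (cv G \ cd G).Finite := Set.finite_of_ncard_pos (by omega)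
    symm
    apply Set.eq_of_subset_of_ncard_le _ _ hfin
    · rintro y (rfl | rfl | rfl)
      exacts [h0, hu, hw]
    · rw [h3, Set.ncard_eq_three.2 ⟨0, u, c * m, ?_, ?_, ?_, rfl⟩]
      · rintro rfl; simp at hun
      · intro h; rw [← h, norm_zero] at hwn; linarith
      · intro h; rw [← h, hun] at hwn; linarith
  have X1 : ∀ y ∈ cv G \ cd G, ‖y‖ = 1 → y = u := by
    intro y hy hn
    rw [hX] at hy
    rcases hy with rfl | rfl | rfl
    · simp at hn
    · rfl
    · rw [hwn] at hn; linarith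
  have X2 : ∀ y ∈ cv G \ cd G, 2 ≤ ‖y‖ → y = c * m := by
    intro y hy hn
    rw [hX] at hy
    rcases hy with rfl | rfl | rfl
    · simp at hn; linarith
    · linarith
    · rfl
  have inv_eq : ∀ t : ℂ, ‖t‖ = 1 → t ≠ 1 → t⁻¹ = t → t = -1 := by
    intro t ht ht1 hi
    have ht0 : t ≠ 0 := by rintro rfl; simp at ht
    have : t * t = 1 := by nth_rw 1 [← hi]; exact inv_mul_cancel₀ ht0
    exact (mul_self_eq_one_iff.1 this).resolve_left ht1
  have hu2 : u = -1 := inv_eq u hun hu1 (X1 _ hu' hun')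
  have hc2 : c = -1 := inv_eq c hc hc1
    (mul_right_cancel₀ hmC (X2 _ hw' (by rw [hwn']; exact hmR)))
  subst hu2 hc2
  have hcd : cd G = {1, (m : ℂ)} := by
    apply Set.Subset.antisymm
    · rintro y ⟨V, hV, rfl⟩
      by_cases hd : V.character 1 = 1
      · exact Or.inl hd
      · right
        obtain ⟨n, c', hn, e, hc', -, hmem, -⟩ := F5 V hV hd
        have hnn : ‖c' * (n : ℂ)‖ = n := by rw [norm_mul, hc', one_mul, Complex.norm_natCast]
        have := X2 _ hmem (by rw [hnn]; exact_mod_cast hn)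
        have := congrArg norm this
        rw [hnn, hwn] at this
        have : n = m := by exact_mod_cast this
        rw [e, this]; rfl
    · rintro y (rfl | rfl)
      · exact F2
      · exact ⟨V₀, hV₀, hm⟩
  have hcv : cv G = {1, (m : ℂ), -1, -(m : ℂ), 0} := by
    have hsub : cd G ⊆ cv G := by
      rintro y ⟨V, hV, h⟩; exact ⟨V, hV, 1, h⟩
    rw [← Set.sdiff_union_of_subset hsub, hX, hcd]
    ext y
    simp only [Set.mem_union, Set.mem_insert_iff, Set.mem_singleton_iff, neg_mul, one_mul]
    tauto
  have h2g : IsPGroup 2 G := by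
    apply two_group
    intro ψ g
    by_cases h : ψ g = 1
    · rw [h, one_pow]
    · have := X1 _ (F3 ψ g h) (Flin ψ g)
      apply Units.ext
      rw [Units.val_pow_eq_pow_val, this]; simp
  refine ⟨h2g, ?_, ⟨m, hcd, hcv⟩, ?_⟩
  · rw [hcd, Set.ncard_pair]
    intro h
    have : 1 = m := by exact_mod_cast h
    omega
  · intro V hV
    have hval : ∀ g, V.character g ∈ ({1, (m : ℂ), -1, -(m : ℂ), 0} : Set ℂ) := by
      intro g; rw [← hcv]; exact ⟨V, hV, g, rfl⟩
    have hnormneg : ‖(-(m : ℂ))‖ = m := by rw [norm_neg, Complex.norm_natCast]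
    by_cases hd : V.character 1 = 1
    · have hsub : Set.range V.character ⊆ {1, -1, 0} := by
        rintro _ ⟨g, rfl⟩
        have hd' := hd
        rw [FDRep.char_one] at hd'
        have hd' : Module.finrank ℂ V = 1 := by exact_mod_cast hd'
        obtain ⟨t, ht⟩ := fd_schur V (V.ρ g) fun h => commute_of_dim_one hd' _ _
        have hn := scalar_norm V ht
        have e := char_scalar V ht 1
        rw [mul_one, hd, mul_one] at e
        rw [← e] at hn
        rcases hval g with h | h | h | h | h
        · simp [h]
        · rw [h, Complex.norm_natCast] at hn; linarith
        · simp [h]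
        · rw [h, hnormneg] at hn; linarith
        · have h : V.character g = 0 := h
          simp [h]
      exact (Set.ncard_le_ncard hsub (Set.toFinite _)).trans (ncard_three_le _ _ _)
    · obtain ⟨n, -, -, -, -, -, -, -, x, hx⟩ := F5 V hV hd
      have hno : ∀ g, V.character g * V.character g ≠ 1 := by
        intro g hg
        obtain ⟨k, hk⟩ := h2g g
        obtain ⟨l, hl⟩ := h2g x
        obtain ⟨r, hr, er⟩ := char_cong V g (k + 1) (by rw [pow_succ, pow_mul, hk, one_pow])
        obtain ⟨r', hr', er'⟩ := char_cong V x l hl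
        rw [pow_succ', pow_mul, pow_two, hg, one_pow] at er
        rw [hx, zero_pow (by positivity)] at er'
        exact half_not_int (r - r') (hr.sub hr') (by linear_combination er - er')
      have hsub : Set.range V.character ⊆ {(m : ℂ), -(m : ℂ), 0} := by
        rintro _ ⟨g, rfl⟩
        rcases hval g with h | h | h | h | h
        · exact absurd (by rw [h, mul_one]) (hno g)
        · exact Or.inl h
        · exact absurd (by rw [h]; ring) (hno g)
        · exact Or.inr (Or.inl h)
        · exact Or.inr (Or.inr h)
      exact (Set.ncard_le_ncard hsub (Set.toFinite _)).trans (ncard_three_le _ _ _)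
end

section
/- Let G be a finite 2-group with exactly two character degrees cd(G) = {1, m} and suppose every non-linear irreducible character χ of G has |cv(χ)| ≤ 3 (so cv(χ) = {χ(1), −χ(1)·c, 0} type values restricted to {m, −1-related values}; concretely cv(G) = {1, m, −1, −m, 0}). Then there exists a normal subgroup N of G such that G/N is an extraspecial 2-group. -/
open CategoryTheory
/-- Schur: an endomorphism commuting with an irreducible representation is a scalar. -/
lemma schur_scalar {Q V : Type} [Group Q] [AddCommGroup V] [Module ℂ V] [FiniteDimensional ℂ V]
    (ρ : Representation ℂ Q V) [hρ : Representation.IsIrreducible ρ] (f : V →ₗ[ℂ] V)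
    (hf : ∀ q v, f (ρ q v) = ρ q (f v)) : ∃ c : ℂ, ∀ v, f v = c • v := by
  let F : Representation.IntertwiningMap ρ ρ := f.intertwiningMap_of_isIntertwiningMap ρ ρ hf
  obtain ⟨c, hc⟩ :=
    (Representation.IsIrreducible.algebraMap_intertwiningMap_bijective_of_isAlgClosed (ρ := ρ)).2 F
  refine ⟨c, fun v => ?_⟩
  have h : (algebraMap ℂ (Representation.IntertwiningMap ρ ρ) c) v = F v := by rw [hc]
  rw [Algebra.algebraMap_eq_smul_one] at h
  exact h.symm

/-- Inflation of an irreducible representation is simple. -/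
lemma simple_inflate {G Q V : Type} [Group G] [Finite G] [Group Q] [AddCommGroup V] [Module ℂ V]
    [FiniteDimensional ℂ V] (p : G →* Q) (hp : Function.Surjective p)
    (ρ : Representation ℂ Q V) [hρ : Representation.IsIrreducible ρ] :
    Simple (FDRep.of (ρ.comp p : Representation ℂ G V)) := by
  rw [FDRep.simple_iff_end_is_rank_one]
  have hnt : Nontrivial V := by
    by_contra h
    rw [not_nontrivial_iff_subsingleton] at h
    have h1 : (⊥ : Subrepresentation ρ) ≠ ⊤ := bot_ne_top
    apply h1
    apply Subrepresentation.toSubmodule_injective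
    exact Subsingleton.elim _ _
  refine (finrank_eq_one_iff_of_nonzero' (𝟙 (FDRep.of (ρ.comp p : Representation ℂ G V))) ?_).2 ?_
  · intro h
    obtain ⟨v, hv⟩ := exists_ne (0 : V)
    apply hv
    have h2 := congrArg (fun f => f.hom.hom.hom v) h
    exact h2
  · intro w
    obtain ⟨c, hc⟩ := schur_scalar ρ (w.hom.hom.hom : V →ₗ[ℂ] V) (by
      intro q v
      obtain ⟨g, rfl⟩ := hp q
      have h := congrArg (fun f => f.hom.hom v) (w.comm g)
      exact h)
    refine ⟨c, ?_⟩
    ext v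
    exact (hc v).symm

/-- A simple module over the group algebra gives an irreducible representation. -/
lemma irr_of_simpleModule {Q : Type} [Group Q] [Finite Q] (M : Type) [AddCommGroup M]
    [Module (MonoidAlgebra ℂ Q) M] [hS : IsSimpleModule (MonoidAlgebra ℂ Q) M] (z : Q) (s : M)
    (hne : (MonoidAlgebra.single z (1 : ℂ) : MonoidAlgebra ℂ Q) • s ≠ s) :
    ∃ (V : Type) (_ : AddCommGroup V) (_ : Module ℂ V) (_ : FiniteDimensional ℂ V)
      (ρ : Representation ℂ Q V), Representation.IsIrreducible ρ ∧ ∃ v, ρ z v ≠ v := by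
  have hA : FiniteDimensional ℂ (MonoidAlgebra ℂ Q) := inferInstance
  have hfin : Module.Finite ℂ (RestrictScalars ℂ (MonoidAlgebra ℂ Q) M) := by
    let f : MonoidAlgebra ℂ Q →ₗ[ℂ] RestrictScalars ℂ (MonoidAlgebra ℂ Q) M :=
      { toFun := fun x => (RestrictScalars.addEquiv ℂ (MonoidAlgebra ℂ Q) M).symm (x • s)
        map_add' := fun x y => by rw [add_smul, map_add]
        map_smul' := fun c x => by
          rw [Algebra.smul_def, mul_smul]
          exact RestrictScalars.addEquiv_symm_map_algebraMap_smul ℂ (MonoidAlgebra ℂ Q) M c _ }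
    refine Module.Finite.of_surjective f ?_
    have hs0 : s ≠ 0 := by rintro rfl; simp at hne
    intro y
    obtain ⟨x, hx⟩ := IsSimpleModule.toSpanSingleton_surjective (MonoidAlgebra ℂ Q) hs0
      (RestrictScalars.addEquiv ℂ (MonoidAlgebra ℂ Q) M y)
    refine ⟨x, ?_⟩
    exact hx
  refine ⟨RestrictScalars ℂ (MonoidAlgebra ℂ Q) M, inferInstance,
    RestrictScalars.module ℂ (MonoidAlgebra ℂ Q) M, hfin,
    Representation.ofModule (k := ℂ) (G := Q) M,
    (Representation.isSimpleModule_iff_irreducible_ofModule M).1 hS,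
    (RestrictScalars.addEquiv ℂ (MonoidAlgebra ℂ Q) M).symm s, ?_⟩
  intro h
  exact hne h

/-- Central elements acting nontrivially on some irreducible. -/
lemma exists_irr {Q : Type} [Group Q] [Finite Q] (z : Q) (hz : z ∈ Subgroup.center Q)
    (h1 : z ≠ 1) : ∃ (V : Type) (_ : AddCommGroup V) (_ : Module ℂ V) (_ : FiniteDimensional ℂ V)
      (ρ : Representation ℂ Q V), Representation.IsIrreducible ρ ∧ ∃ v, ρ z v ≠ v := by
  classical
  let a : (MonoidAlgebra ℂ Q) := MonoidAlgebra.single z 1 - 1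
  have ha : a ≠ 0 := by
    intro h
    have h' : (MonoidAlgebra.single z 1 : (MonoidAlgebra ℂ Q)) = MonoidAlgebra.single 1 1 := sub_eq_zero.1 h
    have := (MonoidAlgebra.of_injective (R := ℂ) (M := Q)) (a₁ := z) (a₂ := 1) h'
    exact h1 this
  have hcomm : ∀ x : (MonoidAlgebra ℂ Q), x * a = a * x := by
    intro x
    have : x * MonoidAlgebra.single z 1 = MonoidAlgebra.single z 1 * x := by
      induction x using MonoidAlgebra.induction_linear with
      | zero => simp
      | add x y hx hy => rw [add_mul, mul_add, hx, hy]
      | single g r =>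
        rw [MonoidAlgebra.single_mul_single, MonoidAlgebra.single_mul_single, Subgroup.mem_center_iff.1 hz g, mul_comm]
    simp only [a, mul_sub, sub_mul, this, mul_one, one_mul]
  have hex : ∃ S : Submodule (MonoidAlgebra ℂ Q) (MonoidAlgebra ℂ Q), IsSimpleModule (MonoidAlgebra ℂ Q) S ∧ ∃ s ∈ S, a * s ≠ 0 := by
    by_contra hcon
    push Not at hcon
    have hle : sSup {m : Submodule (MonoidAlgebra ℂ Q) (MonoidAlgebra ℂ Q) | IsSimpleModule (MonoidAlgebra ℂ Q) m} ≤
        LinearMap.ker (LinearMap.toSpanSingleton (MonoidAlgebra ℂ Q) (MonoidAlgebra ℂ Q) a) := by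
      apply sSup_le
      intro S hS s hs
      simp only [LinearMap.mem_ker, LinearMap.toSpanSingleton_apply, smul_eq_mul]
      rw [hcomm]
      exact hcon S hS s hs
    rw [IsSemisimpleModule.sSup_simples_eq_top] at hle
    have := hle (Submodule.mem_top (x := (1 : (MonoidAlgebra ℂ Q))))
    simp only [LinearMap.mem_ker, LinearMap.toSpanSingleton_apply, smul_eq_mul, one_mul] at this
    exact ha this
  obtain ⟨S, hS, s, hs, hne⟩ := hex
  refine irr_of_simpleModule S z ⟨s, hs⟩ ?_
  intro h
  apply hne
  have h4 := congrArg Subtype.val h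
  simp only [a, sub_mul, one_mul]
  rw [sub_eq_zero]
  exact h4

/-- Simple representations of a commutative group have degree one. -/
lemma simple_comm_deg {G : Type} [Group G] [Fintype G] (hc : ∀ a b : G, a * b = b * a)
    (V : FDRep ℂ G) (hV : Simple V) : V.character 1 = 1 := by
  have hn := (FDRep.simple_iff_char_is_norm_one V).1 hV
  have hr := (FDRep.simple_iff_end_is_rank_one V).1 hV
  have hid : (𝟙 V) ≠ 0 := id_nonzero V
  have key : ∀ g : G, ∃ c : ℂ, ∀ v, V.ρ g v = c • v := by
    intro g
    obtain ⟨c, hc⟩ := (finrank_eq_one_iff_of_nonzero' _ hid).1 hr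
      { hom := Action.ρ V g
        comm := fun h => by
          have e1 : Action.ρ V (g * h) = Action.ρ V (h * g) := by rw [hc]
          rw [map_mul, map_mul] at e1
          exact e1 }
    refine ⟨c, fun v => ?_⟩
    have := congrArg (fun f => f.hom.hom.hom v) hc
    exact this.symm
  choose c hc' using key
  have hchar : ∀ g, V.character g = c g * V.character 1 := by
    intro g
    have : V.ρ g = c g • LinearMap.id := by ext v; simp [hc' g v]
    rw [FDRep.char_one, FDRep.character, this, map_smul, LinearMap.trace_id, smul_eq_mul]
  have hd0 : V.character 1 ≠ 0 := by
    intro h0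
    rw [Finset.sum_eq_zero] at hn
    · have : (Nat.card G : ℂ) ≠ 0 := by simp
      exact this hn.symm
    · intro g _
      rw [hchar g, h0]; simp
  have hcc : ∀ g, c g * c g⁻¹ = 1 := by
    intro g
    have hnt : ∃ v : V, v ≠ 0 := by
      by_contra h
      push Not at h
      have : Subsingleton V := ⟨fun a b => by rw [h a, h b]⟩
      apply hd0
      rw [FDRep.char_one, Module.finrank_zero_of_subsingleton]; simp
    obtain ⟨v, hv⟩ := hnt
    have h1 : V.ρ g (V.ρ g⁻¹ v) = v := by
      rw [← Module.End.mul_apply, ← map_mul]; simp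
    rw [hc' g⁻¹, map_smul, hc' g, smul_smul] at h1
    have h2 : (c g⁻¹ * c g - 1) • v = 0 := by rw [sub_smul, h1, one_smul, sub_self]
    rcases smul_eq_zero.1 h2 with h | h
    · rw [mul_comm]; exact sub_eq_zero.1 h
    · exact absurd h hv
  have hsum : ∑ g : G, V.character g * V.character g⁻¹ = Nat.card G * (V.character 1) ^ 2 := by
    rw [Finset.sum_congr rfl (g := fun _ => (V.character 1) ^ 2)]
    · simp
    · intro g _
      rw [hchar g, hchar g⁻¹]
      linear_combination (V.character 1)^2 * hcc g
  rw [hsum] at hn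
  have hcard : (Nat.card G : ℂ) ≠ 0 := by simp
  have hsq : (V.character 1) ^ 2 = 1 := by
    apply mul_left_cancel₀ hcard; rw [hn, mul_one]
  rw [FDRep.char_one] at hsq ⊢
  have : (Module.finrank ℂ V) ^ 2 = 1 := by exact_mod_cast hsq
  have : Module.finrank ℂ V = 1 := by simpa using this
  rw [this]; simp

/-- If all character values of `G` are real, central elements of quotients square to one. -/
lemma center_sq {G Q : Type} [Group G] [Finite G] [Group Q] [Finite Q] (p : G →* Q)
    (hp : Function.Surjective p) (hreal : ∀ x ∈ cv G, x.im = 0)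
    (z : Q) (hz : z ∈ Subgroup.center Q) : z ^ 2 = 1 := by
  by_contra hne
  obtain ⟨V, _, _, _, ρ, hρ, v, hv⟩ := exists_irr (z ^ 2) (Subgroup.pow_mem _ hz 2) hne
  obtain ⟨c, hc⟩ := schur_scalar ρ (ρ z) (by
    intro q v
    rw [← Module.End.mul_apply, ← Module.End.mul_apply, ← map_mul, ← map_mul,
      Subgroup.mem_center_iff.1 hz q])
  have hpow : ∀ n : ℕ, ∀ v, ρ (z ^ n) v = c ^ n • v := by
    intro n
    induction n with
    | zero => intro v; simp
    | succ n ih =>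
      intro v
      rw [pow_succ, map_mul, Module.End.mul_apply, hc, map_smul, ih, smul_smul, pow_succ, mul_comm]
  have hv0 : v ≠ 0 := by rintro rfl; simp at hv
  have hroot : c ^ (Nat.card Q) = 1 := by
    have h := hpow (Nat.card Q) v
    rw [pow_card_eq_one', map_one, Module.End.one_apply] at h
    have h2 : (c ^ Nat.card Q - 1) • v = 0 := by rw [sub_smul, ← h, one_smul, sub_self]
    rcases smul_eq_zero.1 h2 with h | h
    · exact sub_eq_zero.1 h
    · exact absurd h hv0
  obtain ⟨g, rfl⟩ := hp z
  have hmem : (FDRep.of (ρ.comp p : Representation ℂ G V)).character g ∈ cv G :=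
    ⟨_, simple_inflate p hp ρ, g, rfl⟩
  have hval : (FDRep.of (ρ.comp p : Representation ℂ G V)).character g
      = c * (Module.finrank ℂ V : ℂ) := by
    have h : (ρ (p g)) = c • LinearMap.id := by ext v; simp [hc v]
    change LinearMap.trace ℂ V (ρ (p g)) = _
    rw [h, map_smul, LinearMap.trace_id, smul_eq_mul]
  have him := hreal _ hmem
  rw [hval] at him
  have hfr : (Module.finrank ℂ V : ℝ) ≠ 0 := by
    have : Nontrivial V := ⟨v, 0, hv0⟩
    exact_mod_cast (Module.finrank_pos (R := ℂ) (M := V)).ne'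
  have him2 : c.im = 0 := by
    simp at him
    rcases him with h | h
    · exact h
    · exact absurd (by exact_mod_cast h) hfr
  have hnorm : ‖c‖ = 1 := Complex.norm_eq_one_of_pow_eq_one hroot Nat.card_pos.ne'
  have hc2 : c ^ 2 = 1 := by
    have h := Complex.sq_norm c
    rw [hnorm, Complex.normSq_apply, him2] at h
    apply Complex.ext
    · simp [pow_two, him2]; linarith
    · simp [pow_two, him2]
  apply hv
  rw [hpow 2, hc2, one_smul]

theorem extraspecial_quotient_of_two_group (G : Type) [Group G] [Fintype G]
    (hG : IsPGroup 2 G) (m : ℂ) (hm : m ≠ 1)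
    (hcd : cd G = {1, m}) (hcv : cv G = {1, m, -1, -m, 0})
    (hchi : ∀ V : FDRep ℂ G, Simple V → V.character 1 ≠ 1 →
      (Set.range V.character).ncard ≤ 3) :
    ∃ (N : Subgroup G) (hN : N.Normal),
      letI : N.Normal := hN
      IsPGroup 2 (G ⧸ N) ∧
      Subgroup.center (G ⧸ N) = commutator (G ⧸ N) ∧
      Nat.card (Subgroup.center (G ⧸ N)) = 2 := by
  classical
  obtain ⟨V, hV, hVm⟩ : m ∈ cd G := by rw [hcd]; simp
  have hmim : m.im = 0 := by rw [← hVm, FDRep.char_one]; simp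
  have hreal : ∀ x ∈ cv G, x.im = 0 := by
    intro x hx
    rw [hcv] at hx
    simp only [Set.mem_insert_iff, Set.mem_singleton_iff] at hx
    rcases hx with rfl | rfl | rfl | rfl | rfl <;> simp [hmim]
  have hnab : ¬ commutator G ≤ ⊥ := by
    intro h
    apply hm
    rw [← hVm]
    refine simple_comm_deg (fun a b => ?_) V hV
    have := h (Subgroup.commutator_mem_commutator (Subgroup.mem_top a) (Subgroup.mem_top b))
    rw [Subgroup.mem_bot, commutatorElement_eq_one_iff_mul_comm] at this
    exact this
  obtain ⟨N, hNmax⟩ := (Set.toFinite {N : Subgroup G | N.Normal ∧ ¬ commutator G ≤ N}).exists_maximal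
    ⟨⊥, inferInstance, hnab⟩
  obtain ⟨⟨hN, hNc⟩, hmax⟩ := hNmax
  refine ⟨N, hN, ?_⟩
  have hQ : IsPGroup 2 (G ⧸ N) := hG.to_quotient N
  have hsurj := QuotientGroup.mk'_surjective N
  have hmap : (commutator G).map (QuotientGroup.mk' N) = commutator (G ⧸ N) := by
    rw [commutator_def, Subgroup.map_commutator, Subgroup.map_top_of_surjective _ hsurj,
      commutator_def]
  have hcne : commutator (G ⧸ N) ≠ ⊥ := by
    intro h
    rw [← hmap, Subgroup.map_eq_bot_iff, QuotientGroup.ker_mk'] at h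
    exact hNc h
  have hsq := center_sq (QuotientGroup.mk' N) hsurj hreal
  -- minimality of the commutator
  have hmin : ∀ z ∈ Subgroup.center (G ⧸ N), z ≠ 1 →
      commutator (G ⧸ N) ≤ Subgroup.zpowers z := by
    intro z hz hz1
    have hzn : (Subgroup.zpowers z).Normal := by
      refine ⟨fun x hx g => ?_⟩
      have hxc : x ∈ Subgroup.center (G ⧸ N) := (Subgroup.zpowers_le.2 hz) hx
      rw [Subgroup.mem_center_iff.1 hxc g, mul_inv_cancel_right]
      exact hx
    rw [← hmap, Subgroup.map_le_iff_le_comap]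
    by_contra hcon
    have hle : N ≤ (Subgroup.zpowers z).comap (QuotientGroup.mk' N) := by
      intro x hx
      rw [Subgroup.mem_comap]
      have : QuotientGroup.mk' N x = 1 := by simpa using hx
      rw [this]; exact one_mem _
    have h2 := hmax (y := (Subgroup.zpowers z).comap (QuotientGroup.mk' N))
      ⟨inferInstance, hcon⟩ hle
    obtain ⟨g, rfl⟩ := hsurj z
    have h3 : g ∈ N := h2 (Subgroup.mem_comap.2 (Subgroup.mem_zpowers _))
    apply hz1
    simpa using h3
  have hmem : ∀ z ∈ Subgroup.center (G ⧸ N), ∀ x ∈ Subgroup.zpowers z, x = 1 ∨ x = z := by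
    intro z hz x hx
    obtain ⟨k, rfl⟩ := Subgroup.mem_zpowers_iff.1 hx
    have h2 : z ^ (2:ℤ) = 1 := by exact_mod_cast hsq z hz
    rcases Int.even_or_odd' k with ⟨j, rfl | rfl⟩
    · left; rw [zpow_mul, h2, one_zpow]
    · right; rw [zpow_add, zpow_mul, h2, one_zpow, one_mul, zpow_one]
  obtain ⟨w, hw, hw1⟩ := (Subgroup.bot_or_exists_ne_one (commutator (G ⧸ N))).resolve_left hcne
  have huniq : ∀ z ∈ Subgroup.center (G ⧸ N), z ≠ 1 → z = w := by
    intro z hz hz1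
    rcases hmem z hz w (hmin z hz hz1 hw) with h | h
    · exact absurd h hw1
    · exact h.symm
  have hnt : Nontrivial (G ⧸ N) := ⟨w, 1, hw1⟩
  have : Fact (Nat.Prime 2) := ⟨Nat.prime_two⟩
  have hcnt : Nontrivial (Subgroup.center (G ⧸ N)) := hQ.center_nontrivial
  obtain ⟨⟨z, hz⟩, hz1⟩ := exists_ne (1 : Subgroup.center (G ⧸ N))
  have hz1' : z ≠ 1 := fun h => hz1 (Subtype.ext h)
  obtain rfl := huniq z hz hz1'
  have hcen : Subgroup.center (G ⧸ N) = Subgroup.zpowers z := by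
    apply le_antisymm
    · intro x hx
      by_cases hx1 : x = 1
      · rw [hx1]; exact one_mem _
      · rw [huniq x hx hx1]; exact Subgroup.mem_zpowers _
    · rwa [Subgroup.zpowers_le]
  refine ⟨hQ, ?_, ?_⟩
  · apply le_antisymm
    · rw [hcen, Subgroup.zpowers_le]; exact hw
    · rw [hcen]; exact hmin z hz hz1'
  · rw [hcen, Nat.card_zpowers]
    exact orderOf_eq_prime (hsq z hz) hz1'
end
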